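/- Let H = (V, A) be a consistent multi-head HyTN. Then there exists a selection π assigning to every hyperarc A ∈ A a head π(A) ∈ H_A such that the weighted directed graph on V whose arcs are (t_A, π(A)) with weight w_A(π(A)), for A ∈ A, is conservative: every directed cycle of this graph has nonnegative total weight. (In game terms: if H is consistent, then in the mean payoff game G_H obtained from H every node is a winning start position for Player 1, the selection π being a positional winning strategy.) -/

import Mathlib

/-!
A feasible scheduling `s` is a potential for a suitable selection: feasibility at a hyperarc says
that some head `u` satisfies `s u - s (tail i) ≤ w i u`, and selecting these heads bounds the weight
of each selected arc below by the difference of `s` along it. Around a directed cycle these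
differences telescope to `0`, so the total weight is nonnegative.
-/

section Conservative

variable {V ι G : Type*} [AddCommGroup G] [Preorder G]

/-- The directed multigraph on `V` with an arc `(src i, tgt i)` of weight `w i` for each `i : ι` is
conservative: every directed cycle has nonnegative total weight. A cycle is a cyclic sequence of arc
indices; `ZMod (ℓ + 1)` rather than `ZMod ℓ` rules out the infinite index type `ZMod 0 = ℤ`. -/
def IsConservative (src tgt : ι → V) (w : ι → G) : Prop :=
  ∀ (ℓ : ℕ) (c : ZMod (ℓ + 1) → ι), (∀ k, tgt (c k) = src (c (k + 1))) → 0 ≤ ∑ k, w (c k)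

/-- `s` is a potential for the directed multigraph with arcs `(src i, tgt i)` of weight `w i`:
it increases by at most `w i` along the arc `i`. Potentials certify conservativity. -/
def IsPotential (src tgt : ι → V) (w : ι → G) (s : V → G) : Prop :=
  ∀ i, s (tgt i) - s (src i) ≤ w i

theorem sum_apply_perm_sub_eq_zero {κ M : Type*} [Fintype κ] [AddCommGroup M]
    (σ : Equiv.Perm κ) (f : κ → M) : ∑ k, (f (σ k) - f k) = 0 := by
  rw [Finset.sum_sub_distrib, Equiv.sum_comp, sub_self]

theorem IsPotential.isConservative [IsOrderedAddMonoid G] {src tgt : ι → V} {w : ι → G}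
    {s : V → G} (hs : IsPotential src tgt w s) : IsConservative src tgt w := by
  intro ℓ c hc
  calc
    0 = ∑ k, (s (src (c (k + 1))) - s (src (c k))) :=
      (sum_apply_perm_sub_eq_zero (Equiv.addRight 1) fun k => s (src (c k))).symm
    _ = ∑ k, (s (tgt (c k)) - s (src (c k))) := by simp only [hc]
    _ ≤ ∑ k, w (c k) := Finset.sum_le_sum fun k _ => hs (c k)

end Conservative

section Feasible

variable {V ι G : Type*} [AddCommGroup G]

/-- `s` is a feasible scheduling of the multi-head HyTN with hyperarcs `(tail i, heads i, w i)`.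
The constraint `min_{u ∈ heads i} (s u - w i u) ≤ s (tail i)` is encoded as the existence of a head
satisfying the bound, which makes sense for infinite head sets and preordered weights. -/
def IsFeasible [LE G] (tail : ι → V) (heads : ι → Set V) (w : ι → V → G) (s : V → G) : Prop :=
  ∀ i, ∃ u ∈ heads i, s u - w i u ≤ s (tail i)

theorem isFeasible_coe_iff_inf'_le [LinearOrder G] {tail : ι → V} {heads : ι → Finset V}
    {w : ι → V → G} (hne : ∀ i, (heads i).Nonempty) {s : V → G} :
    IsFeasible tail (fun i => heads i) w s ↔
      ∀ i, (heads i).inf' (hne i) (fun u => s u - w i u) ≤ s (tail i) := by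
  simp only [IsFeasible, Finset.mem_coe, Finset.inf'_le_iff]

theorem IsFeasible.exists_selection_isPotential [Preorder G] [IsOrderedAddMonoid G]
    {tail : ι → V} {heads : ι → Set V} {w : ι → V → G} {s : V → G}
    (hs : IsFeasible tail heads w s) :
    ∃ π : ι → V, (∀ i, π i ∈ heads i) ∧ IsPotential tail π (fun i => w i (π i)) s := by
  choose π hπ hle using hs
  exact ⟨π, hπ, fun i => sub_le_comm.mp (hle i)⟩

end Feasible

theorem stmt_9_general {V ι G : Type*} [AddCommGroup G] [Preorder G] [IsOrderedAddMonoid G]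
    (tail : ι → V) (heads : ι → Set V) (w : ι → V → G)
    (hcons : ∃ s : V → G, IsFeasible tail heads w s) :
    ∃ π : ι → V, (∀ i, π i ∈ heads i) ∧ IsConservative tail π (fun i => w i (π i)) := by
  obtain ⟨s, hs⟩ := hcons
  obtain ⟨π, hπ, hpot⟩ := hs.exists_selection_isPotential
  exact ⟨π, hπ, hpot.isConservative⟩

/-- If a multi-head HyTN `H = (V, A)` (hyperarcs indexed by `ι`, each with
tail `tail i`, nonempty head set `heads i` not containing the tail, and real
weights `w i`) is consistent, then there is a selection `π` of one head per
hyperarc such that the weighted directed graph on `V` with one arc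
`(tail i, π i)` of weight `w i (π i)` per hyperarc is conservative: every
directed cycle of this graph (encoded as a cyclic sequence
`c : ZMod (ℓ+1) → ι` of arc indices in which the selected head of each arc is
the tail of the next) has nonnegative total weight.  (Game-theoretically:
every node of the mean payoff game `G_H` is a winning start position for
Player 1, with `π` a positional winning strategy.) -/
theorem stmt_9 {V ι : Type*} [Fintype V] [Fintype ι]
    (tail : ι → V) (heads : ι → Finset V) (w : ι → V → ℝ)
    (hne : ∀ i, (heads i).Nonempty) (hnt : ∀ i, tail i ∉ heads i)
    (hcons : ∃ s : V → ℝ, ∀ i, (heads i).inf' (hne i) (fun u => s u - w i u) ≤ s (tail i)) :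
    ∃ π : ι → V, (∀ i, π i ∈ heads i) ∧
      ∀ (ℓ : ℕ) (c : ZMod (ℓ + 1) → ι),
        (∀ k, π (c k) = tail (c (k + 1))) → 0 ≤ ∑ k, w (c k) (π (c k)) := by
  obtain ⟨s, hs⟩ := hcons
  exact stmt_9_general tail _ w ⟨s, (isFeasible_coe_iff_inf'_le hne).mpr hs⟩
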